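/- Let n, q be natural numbers, let λ ≥ 0, and let g : ℝ^n → ℝ^q be a λ-Lipschitz map such that the preimage under g of every bounded subset of ℝ^q is bounded. Then for every ε > 0 there exists an infinitely differentiable map g' : ℝ^n → ℝ^q such that: (1) g' is (λ + ε)-Lipschitz; (2) ‖g'(x) − g(x)‖ ≤ ε for all x ∈ ℝ^n; (3) the preimage under g' of every bounded subset of ℝ^q is bounded; and (4) the origin 0 ∈ ℝ^q is a regular value of g', i.e. for every x with g'(x) = 0 the total derivative of g' at x is a surjective linear map ℝ^n → ℝ^q. -/

import Mathlib

open MeasureTheory in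
open scoped Convolution in
/-- Mollification of a Lipschitz map. -/
lemma exists_smooth_lipschitz_approx (n q : ℕ) (lam : ℝ) (hlam : 0 ≤ lam)
    (g : EuclideanSpace ℝ (Fin n) → EuclideanSpace ℝ (Fin q))
    (hg : ∀ x y, ‖g x - g y‖ ≤ lam * ‖x - y‖) (δ : ℝ) (hδ : 0 < δ) :
    ∃ h : EuclideanSpace ℝ (Fin n) → EuclideanSpace ℝ (Fin q),
      ContDiff ℝ (⊤ : ℕ∞) h ∧ (∀ x y, ‖h x - h y‖ ≤ lam * ‖x - y‖) ∧
      (∀ x, ‖h x - g x‖ ≤ δ) := by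
  have hgL : LipschitzWith ⟨lam, hlam⟩ g := LipschitzWith.of_dist_le_mul fun x y => by
    rw [dist_eq_norm, dist_eq_norm]; exact hg x y
  have hgc : Continuous g := hgL.continuous
  have hr : 0 < δ / (lam + 1) := by positivity
  let φ : ContDiffBump (0 : EuclideanSpace ℝ (Fin n)) :=
    ⟨δ / (lam + 1) / 2, δ / (lam + 1), by positivity, by linarith⟩
  have hex := φ.hasCompactSupport_normed (μ := volume)
    |>.convolutionExists_left_of_continuous_right (μ := volume) (ContinuousLinearMap.lsmul ℝ ℝ)
      (φ.continuous_normed (μ := volume)).locallyIntegrable hgc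
  refine ⟨φ.normed volume ⋆[ContinuousLinearMap.lsmul ℝ ℝ, volume] g, ?_, ?_, ?_⟩
  · exact φ.hasCompactSupport_normed.contDiff_convolution_left _ φ.contDiff_normed
      hgc.locallyIntegrable
  · intro x y
    rw [convolution_def, convolution_def, ← integral_sub (hex x) (hex y)]
    have h1 : ∀ t, ‖(ContinuousLinearMap.lsmul ℝ ℝ) (φ.normed volume t) (g (x - t)) -
        (ContinuousLinearMap.lsmul ℝ ℝ) (φ.normed volume t) (g (y - t))‖
        ≤ φ.normed volume t * (lam * ‖x - y‖) := by
      intro t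
      simp only [ContinuousLinearMap.lsmul_apply]
      rw [← smul_sub, norm_smul, Real.norm_of_nonneg (φ.nonneg_normed t)]
      have := hg (x - t) (y - t)
      rw [sub_sub_sub_cancel_right] at this
      exact mul_le_mul_of_nonneg_left this (φ.nonneg_normed t)
    refine (norm_integral_le_of_norm_le (φ.integrable_normed.mul_const _)
      (Filter.Eventually.of_forall h1)).trans ?_
    rw [integral_mul_const, φ.integral_normed, one_mul]
  · intro x
    rw [← dist_eq_norm]
    refine φ.dist_normed_convolution_le hgc.aestronglyMeasurable fun y hy => ?_
    rw [dist_eq_norm]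
    have h2 : ‖y - x‖ < δ / (lam + 1) := by simpa [dist_eq_norm] using hy
    calc ‖g y - g x‖ ≤ lam * ‖y - x‖ := hg y x
      _ ≤ (lam + 1) * (δ / (lam + 1)) := by gcongr; linarith
      _ = δ := by field_simp

/-- Inclusion of the coordinates different from `i` plus a linear `i`-th coordinate `t`. -/
noncomputable def graphInc (q : ℕ) (i : Fin q) (t : EuclideanSpace ℝ {j : Fin q // j ≠ i} →L[ℝ] ℝ) :
    EuclideanSpace ℝ {j : Fin q // j ≠ i} →L[ℝ] EuclideanSpace ℝ (Fin q) :=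
  LinearMap.toContinuousLinearMap (𝕜 := ℝ) (E := EuclideanSpace ℝ {j : Fin q // j ≠ i})
    (F' := EuclideanSpace ℝ (Fin q))
    { toFun := fun f => WithLp.toLp 2 (fun j => if h : j ≠ i then f ⟨j, h⟩ else 0)
      map_add' := fun f f' => by ext j; by_cases h : j = i <;> simp [h]
      map_smul' := fun c f => by ext j; by_cases h : j = i <;> simp [h] }
  + t.smulRight (EuclideanSpace.single i (1 : ℝ))

lemma graphInc_apply (q : ℕ) (i : Fin q) (t : EuclideanSpace ℝ {j : Fin q // j ≠ i} →L[ℝ] ℝ)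
    (f : EuclideanSpace ℝ {j : Fin q // j ≠ i}) (j : Fin q) :
    graphInc q i t f j = if h : j ≠ i then f ⟨j, h⟩ else t f := by
  by_cases h : j = i
  · subst h; simp [graphInc]
  · simp [graphInc, h]

lemma contDiff_graphInc (q : ℕ) (i : Fin q) : ContDiff ℝ 1 (graphInc q i) := by
  unfold graphInc
  refine contDiff_const.add ?_
  exact ContDiff.smulRight contDiff_id contDiff_const

/-- A non-surjective map factors through some `graphInc`. -/
lemma exists_graphInc_of_not_surjective {n q : ℕ}
    (B : EuclideanSpace ℝ (Fin n) →L[ℝ] EuclideanSpace ℝ (Fin q))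
    (hB : ¬ Function.Surjective B) :
    ∃ (i : Fin q) (t : EuclideanSpace ℝ {j : Fin q // j ≠ i} →L[ℝ] ℝ)
      (C : EuclideanSpace ℝ (Fin n) →L[ℝ] EuclideanSpace ℝ {j : Fin q // j ≠ i}),
      B = (graphInc q i t).comp C := by
  have h1 : (LinearMap.range (B : EuclideanSpace ℝ (Fin n) →ₗ[ℝ] EuclideanSpace ℝ (Fin q)))ᗮ ≠ ⊥ := by
    intro h
    rw [Submodule.orthogonal_eq_bot_iff, LinearMap.range_eq_top] at h
    exact hB h
  obtain ⟨v, hv, hv0⟩ := Submodule.exists_mem_ne_zero_of_ne_bot h1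
  have hvB : ∀ y, ∑ j, v j * B y j = 0 := by
    intro y
    have := (Submodule.mem_orthogonal' _ v).1 hv (B y) ⟨y, rfl⟩
    rw [PiLp.inner_apply] at this
    simpa [mul_comm] using this
  obtain ⟨i, hi⟩ : ∃ i, v i ≠ 0 := by
    by_contra! hh
    exact hv0 (by ext j; simpa using hh j)
  let t : EuclideanSpace ℝ {j : Fin q // j ≠ i} →L[ℝ] ℝ :=
    LinearMap.toContinuousLinearMap
      { toFun := fun f => -(v i)⁻¹ * ∑ j, v j.1 * f j
        map_add' := fun f f' => by simp [mul_add, Finset.sum_add_distrib]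
        map_smul' := fun c f => by
          simp only [PiLp.smul_apply, smul_eq_mul, RingHom.id_apply, Finset.mul_sum]
          exact Finset.sum_congr rfl fun j _ => by ring }
  let P : EuclideanSpace ℝ (Fin q) →L[ℝ] EuclideanSpace ℝ {j : Fin q // j ≠ i} :=
    LinearMap.toContinuousLinearMap
      { toFun := fun f => WithLp.toLp 2 (fun j => f j.1)
        map_add' := fun f f' => by ext j; simp
        map_smul' := fun c f => by ext j; simp }
  refine ⟨i, t, P.comp B, ?_⟩
  ext y j
  simp only [ContinuousLinearMap.comp_apply, graphInc_apply]
  split_ifs with h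
  · simp [P]
  · push Not at h
    subst h
    have h3 := hvB y
    rw [Fintype.sum_eq_add_sum_subtype_ne _ j] at h3
    have h4 : t (P (B y)) = -(v j)⁻¹ * ∑ k : {k : Fin q // k ≠ j}, v k.1 * B y k.1 := by
      simp [t, P]
    rw [h4]
    field_simp
    linarith

/-- Bad parameters have dense complement. -/
lemma dense_good_params (n q : ℕ)
    (h : EuclideanSpace ℝ (Fin n) → EuclideanSpace ℝ (Fin q)) (hh : ContDiff ℝ (⊤ : ℕ∞) h) :
    Dense {p : (EuclideanSpace ℝ (Fin n) →L[ℝ] EuclideanSpace ℝ (Fin q)) ×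
      EuclideanSpace ℝ (Fin q) |
      ∀ x, h x + p.1 x + p.2 = 0 → Function.Surjective (fderiv ℝ h x + p.1)} := by
  let Φ : ∀ i : Fin q, EuclideanSpace ℝ (Fin n) ×
      (EuclideanSpace ℝ {j : Fin q // j ≠ i} →L[ℝ] ℝ) ×
      (EuclideanSpace ℝ (Fin n) →L[ℝ] EuclideanSpace ℝ {j : Fin q // j ≠ i}) →
      (EuclideanSpace ℝ (Fin n) →L[ℝ] EuclideanSpace ℝ (Fin q)) × EuclideanSpace ℝ (Fin q) :=
    fun i z => ((graphInc q i z.2.1).comp z.2.2 - fderiv ℝ h z.1,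
      -(h z.1 + ((graphInc q i z.2.1).comp z.2.2 - fderiv ℝ h z.1) z.1))
  have hΦ : ∀ i, ContDiff ℝ 1 (Φ i) := by
    intro i
    have hA : ContDiff ℝ 1 (fun z : EuclideanSpace ℝ (Fin n) ×
      (EuclideanSpace ℝ {j : Fin q // j ≠ i} →L[ℝ] ℝ) ×
      (EuclideanSpace ℝ (Fin n) →L[ℝ] EuclideanSpace ℝ {j : Fin q // j ≠ i}) =>
        (graphInc q i z.2.1).comp z.2.2 - fderiv ℝ h z.1) := by
      refine ContDiff.sub ?_ ?_
      · exact ((contDiff_graphInc q i).comp (contDiff_fst.comp contDiff_snd)).clm_comp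
          (contDiff_snd.comp contDiff_snd)
      · have : ContDiff ℝ 1 (fderiv ℝ h) := hh.fderiv_right (by norm_cast)
        exact this.comp contDiff_fst
    refine hA.prodMk (ContDiff.neg (ContDiff.add ?_ (hA.clm_apply contDiff_fst)))
    exact (hh.of_le (by norm_cast)).comp contDiff_fst
  have hdim : ∀ i, dimH (Set.range (Φ i)) ≤ ((q * n + q - 1 : ℕ) : ENNReal) := by
    intro i
    refine (hΦ i).dimH_range_le.trans ?_
    have e1 := (LinearMap.toContinuousLinearMap (𝕜 := ℝ)
      (E := EuclideanSpace ℝ {j : Fin q // j ≠ i}) (F' := ℝ)).finrank_eq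
    have e2 := (LinearMap.toContinuousLinearMap (𝕜 := ℝ) (E := EuclideanSpace ℝ (Fin n))
      (F' := EuclideanSpace ℝ {j : Fin q // j ≠ i})).finrank_eq
    rw [Module.finrank_linearMap] at e1 e2
    rw [Module.finrank_prod, Module.finrank_prod, ← e1, ← e2]
    have hc : Fintype.card {j : Fin q // j ≠ i} = q - 1 := by
      simp [Fintype.card_subtype_compl]
    simp only [finrank_euclideanSpace, hc, Fintype.card_fin, Module.finrank_self]
    obtain ⟨m, rfl⟩ : ∃ m, q = m + 1 := ⟨q - 1, by have := i.2; omega⟩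
    refine Nat.cast_le.2 (le_of_eq ?_)
    simp only [Nat.add_sub_cancel]
    have e3 : (m + 1) * n + (m + 1) - 1 = (m + 1) * n + m := by omega
    rw [e3]
    ring
  have hsub : (⋃ i, Set.range (Φ i))ᶜ ⊆
      {p : (EuclideanSpace ℝ (Fin n) →L[ℝ] EuclideanSpace ℝ (Fin q)) × EuclideanSpace ℝ (Fin q) |
      ∀ x, h x + p.1 x + p.2 = 0 → Function.Surjective (fderiv ℝ h x + p.1)} := by
    intro p hp x hx
    by_contra hns
    obtain ⟨i, t, C, hB⟩ := exists_graphInc_of_not_surjective _ hns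
    apply hp
    refine Set.mem_iUnion.2 ⟨i, (x, t, C), ?_⟩
    have hp1 : (graphInc q i t).comp C - fderiv ℝ h x = p.1 := by rw [← hB]; abel
    simp only [Φ, hp1]
    refine Prod.ext rfl ?_
    exact neg_eq_of_add_eq_zero_right hx
  rcases Nat.eq_zero_or_pos q with rfl | hq
  · refine Dense.mono hsub ?_
    simp
  · refine Dense.mono hsub (dense_compl_of_dimH_lt_finrank ?_)
    rw [dimH_iUnion]
    refine (iSup_le hdim).trans_lt ?_
    have e2 := (LinearMap.toContinuousLinearMap (𝕜 := ℝ) (E := EuclideanSpace ℝ (Fin n))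
      (F' := EuclideanSpace ℝ (Fin q))).finrank_eq
    rw [Module.finrank_linearMap] at e2
    rw [Module.finrank_prod, ← e2]
    simp only [finrank_euclideanSpace, Fintype.card_fin]
    refine Nat.cast_lt.2 ?_
    rw [mul_comm n q]
    omega


/-- A proper `λ`-Lipschitz map `g : ℝ^n → ℝ^q` can be approximated, for every
`ε > 0`, by a smooth `(λ + ε)`-Lipschitz map `g'` at uniform distance `≤ ε` from `g`, which
is still proper (preimages of bounded sets are bounded), and for which `0 ∈ ℝ^q` is a
regular value. -/
theorem smooth_proper_lipschitz_approximation (n q : ℕ) (lam : ℝ) (hlam : 0 ≤ lam)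
    (g : EuclideanSpace ℝ (Fin n) → EuclideanSpace ℝ (Fin q))
    (hg_lip : ∀ x y, ‖g x - g y‖ ≤ lam * ‖x - y‖)
    (hg_prop : ∀ s : Set (EuclideanSpace ℝ (Fin q)),
      Bornology.IsBounded s → Bornology.IsBounded (g ⁻¹' s)) :
    ∀ ε : ℝ, 0 < ε →
      ∃ g' : EuclideanSpace ℝ (Fin n) → EuclideanSpace ℝ (Fin q),
        ContDiff ℝ (⊤ : ℕ∞) g' ∧
        (∀ x y, ‖g' x - g' y‖ ≤ (lam + ε) * ‖x - y‖) ∧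
        (∀ x, ‖g' x - g x‖ ≤ ε) ∧
        (∀ s : Set (EuclideanSpace ℝ (Fin q)),
          Bornology.IsBounded s → Bornology.IsBounded (g' ⁻¹' s)) ∧
        (∀ x, g' x = 0 → Function.Surjective (fderiv ℝ g' x)) := by
  intro ε hε
  obtain ⟨h, hh, hhL, hhg⟩ :=
    exists_smooth_lipschitz_approx n q lam hlam g hg_lip (ε / 4) (by positivity)
  obtain ⟨R, hR0, hR⟩ : ∃ R : ℝ, 0 < R ∧ ∀ x, ‖g x‖ ≤ ε → ‖x‖ < R := by
    obtain ⟨R, hR0, hR⟩ := (hg_prop (Metric.closedBall 0 ε)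
      Metric.isBounded_closedBall).exists_pos_norm_lt
    exact ⟨R, hR0, fun x hx => hR x (by simpa using hx)⟩
  let φ : ContDiffBump (0 : EuclideanSpace ℝ (Fin n)) := ⟨R, R + 1, hR0, by linarith⟩
  let ψ : EuclideanSpace ℝ (Fin n) → EuclideanSpace ℝ (Fin n) := fun x => φ x • x
  have hψ : ContDiff ℝ (⊤ : ℕ∞) ψ := φ.contDiff.smul contDiff_id
  have hψc : HasCompactSupport ψ := φ.hasCompactSupport.smul_right
  obtain ⟨K, hK⟩ := hψ.lipschitzWith_of_hasCompactSupport hψc (by simp)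
  obtain ⟨M, hM⟩ := hψc.exists_bound_of_continuous hψ.continuous
  have hM0 : 0 ≤ M := (norm_nonneg _).trans (hM 0)
  have hK0 : (0 : ℝ) ≤ K := K.2
  set δ : ℝ := ε / 4 / (1 + K + M) with hδ
  have hδ0 : 0 < δ := by positivity
  have hδe : δ * (1 + K + M) = ε / 4 := by rw [hδ]; field_simp
  obtain ⟨⟨A, c⟩, hgood, hAc⟩ := (dense_good_params n q h hh).exists_dist_lt 0 hδ0
  have hA : ‖A‖ ≤ δ := by
    rw [dist_zero_left] at hAc
    exact (norm_fst_le (A, c)).trans hAc.le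
  have hc : ‖c‖ ≤ δ := by
    rw [dist_zero_left] at hAc
    exact (norm_snd_le (A, c)).trans hAc.le
  have hAψ : ∀ x, ‖A (ψ x)‖ ≤ δ * M := fun x =>
    (A.le_opNorm _).trans (mul_le_mul hA (hM x) (norm_nonneg _) hδ0.le)
  have hdist : ∀ x, ‖h x + A (ψ x) + c - g x‖ ≤ ε := by
    intro x
    have e : h x + A (ψ x) + c - g x = (h x - g x) + A (ψ x) + c := by abel
    rw [e]
    refine (norm_add₃_le).trans ?_
    have := hhg x
    have := hAψ x
    have : 0 ≤ δ * K := by positivity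
    nlinarith
  refine ⟨fun x => h x + A (ψ x) + c, ?_, ?_, hdist, ?_, ?_⟩
  · exact (hh.add (A.contDiff.comp hψ)).add contDiff_const
  · intro x y
    have e : h x + A (ψ x) + c - (h y + A (ψ y) + c) = (h x - h y) + A (ψ x - ψ y) := by
      rw [map_sub]; abel
    simp only [e]
    refine (norm_add_le _ _).trans ?_
    have h1 := hhL x y
    have h2 : ‖A (ψ x - ψ y)‖ ≤ δ * (K * ‖x - y‖) :=
      (A.le_opNorm _).trans (mul_le_mul hA (by simpa [dist_eq_norm] using hK.dist_le_mul x y)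
        (norm_nonneg _) hδ0.le)
    have h3 : δ * K ≤ ε := by nlinarith [mul_nonneg hδ0.le hM0]
    have h4 := mul_le_mul_of_nonneg_right h3 (norm_nonneg (x - y))
    linarith
  · intro s hs
    refine (hg_prop _ (hs.cthickening (δ := ε))).subset ?_
    intro x hx
    refine Metric.mem_cthickening_of_dist_le _ _ _ _ hx ?_
    rw [dist_comm, dist_eq_norm]
    exact hdist x
  · intro x hx
    have hx' : h x + A (ψ x) + c = 0 := hx
    have hxR : ‖x‖ < R := by
      apply hR
      have := hdist x
      rwa [hx', zero_sub, norm_neg] at this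
    have hψe : ∀ᶠ y in nhds x, ψ y = y := by
      filter_upwards [Metric.isOpen_ball.mem_nhds (show x ∈ Metric.ball 0 R by simpa using hxR)]
        with y hy
      have : φ y = 1 := φ.one_of_mem_closedBall (Metric.ball_subset_closedBall hy)
      simp [ψ, this]
    have hev : (fun x => h x + A (ψ x) + c) =ᶠ[nhds x] fun x => h x + A x + c := by
      filter_upwards [hψe] with y hy
      rw [hy]
    rw [hev.fderiv_eq]
    have hd : HasFDerivAt (fun x => h x + A x + c) (fderiv ℝ h x + A) x :=
      (((hh.differentiable (by simp)) x).hasFDerivAt.add A.hasFDerivAt).add_const c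
    rw [hd.fderiv]
    exact hgood x (by rwa [hψe.self_of_nhds] at hx')
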